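/- arXiv:1803.05811 — 2 statements merged into one kernel-verified Lean document; each statement's English description precedes it below -/
import Mathlib

section
/- Let E₁ and E₂ be Polish spaces and let D ⊆ E₁ × E₂ be a Borel set whose section over e₁ ∈ E₁ is E₂(e₁) = { e₂ : (e₁,e₂) ∈ D }. Let g : E₁ × E₂ → ℝ ∪ {+∞} be lower semi-analytic. Then the function h(e₁) = inf{ g(e₁,e₂) : e₂ ∈ E₂(e₁) } (with inf over the empty set equal to +∞) is lower semi-analytic on E₁. -/
open MeasureTheory

theorem analyticSet_inter {α : Type*} [TopologicalSpace α] [T2Space α] {s t : Set α}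
    (hs : AnalyticSet s) (ht : AnalyticSet t) : AnalyticSet (s ∩ t) := by
  rw [Set.inter_eq_iInter]
  exact AnalyticSet.iInter (Bool.rec ht hs)

theorem setOf_biInf_lt_eq_image_fst {α β γ : Type*} [CompleteLinearOrder γ]
    (D : Set (α × β)) (g : α × β → γ) (c : γ) :
    {a | (⨅ b ∈ {b | (a, b) ∈ D}, g (a, b)) < c} = Prod.fst '' (D ∩ {p | g p < c}) := by
  ext a
  simp [iInf_lt_iff]

theorem lower_semianalytic_partial_inf_general {E₁ E₂ R : Type*}
    [TopologicalSpace E₁] [T2Space E₁] [TopologicalSpace E₂] [T2Space E₂]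
    [CompleteLinearOrder R] {D : Set (E₁ × E₂)} (hD : AnalyticSet D) {g : E₁ × E₂ → R} {c : R}
    (hg : AnalyticSet {p | g p < c}) :
    AnalyticSet {e₁ | (⨅ e₂ ∈ {e₂ | (e₁, e₂) ∈ D}, g (e₁, e₂)) < c} := by
  rw [setOf_biInf_lt_eq_image_fst]
  exact (analyticSet_inter hD hg).image_of_continuous continuous_fst

/-- Let `E₁`, `E₂` be Polish spaces, `D ⊆ E₁ × E₂` Borel with
sections `E₂(e₁) = {e₂ | (e₁,e₂) ∈ D}`, and let `g : E₁ × E₂ → ℝ ∪ {+∞}` be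
lower semi-analytic.  Then `h e₁ = inf { g (e₁,e₂) : e₂ ∈ E₂(e₁) }`
(with `inf ∅ = +∞`) is lower semi-analytic on `E₁`. -/
theorem lower_semianalytic_partial_inf
    {E₁ E₂ : Type*}
    [TopologicalSpace E₁] [PolishSpace E₁] [MeasurableSpace E₁] [BorelSpace E₁]
    [TopologicalSpace E₂] [PolishSpace E₂] [MeasurableSpace E₂] [BorelSpace E₂]
    (D : Set (E₁ × E₂)) (hD : MeasurableSet D)
    (g : E₁ × E₂ → EReal)
    (hg : ∀ c : ℝ, MeasureTheory.AnalyticSet {p : E₁ × E₂ | g p < (c : EReal)})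
    (h : E₁ → EReal)
    (hh : ∀ e₁, h e₁ = ⨅ e₂ ∈ {e₂ : E₂ | (e₁, e₂) ∈ D}, g (e₁, e₂)) :
    ∀ c : ℝ, MeasureTheory.AnalyticSet {e₁ : E₁ | h e₁ < (c : EReal)} := by
  intro c
  simpa only [hh] using lower_semianalytic_partial_inf_general hD.analyticSet (hg c)
end

section
/- Every analytic subset A of a Polish space X is universally measurable: for every finite Borel measure μ on X there exist Borel sets B₁ ⊆ A ⊆ B₂ with μ(B₂ \ B₁) = 0; equivalently, A belongs to the μ-completion of the Borel σ-algebra for every finite Borel measure μ. -/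
open MeasureTheory

/-!
Let `A` be the range of a continuous `f : (ℕ → ℕ) → X` and let `c < μ A`. Bounding the coordinates
one at a time, continuity of `μ` from below yields `b : ℕ → ℕ` such that every set
`f '' {x | ∀ i ∈ I, x i ≤ b i}` with `I` finite still has measure greater than `c`. By compactness
of the box `{x | ∀ i, x i ≤ b i}`, the closures of these sets intersect precisely in the image of
the box, which is therefore a compact subset of `A` of measure at least `c`. Hence, when `μ` is
finite, `A` agrees up to a null set with a countable union of compact subsets of `A`.
-/

open Set Filter
open scoped ENNReal Topology

section Product

variable {ι : Type*} {π : ι → Type*} [∀ i, TopologicalSpace (π i)]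

theorem exists_finset_forall_eqOn_mem_of_isCompact_subset_isOpen {s V : Set (∀ i, π i)}
    (hs : IsCompact s) (hV : IsOpen V) (hsV : s ⊆ V) :
    ∃ I : Finset ι, ∀ x ∈ s, ∀ y, (∀ i ∈ I, y i = x i) → y ∈ V := by
  classical
  refine hs.induction_on (p := fun t ↦ ∃ I : Finset ι, ∀ x ∈ t, ∀ y, (∀ i ∈ I, y i = x i) → y ∈ V)
    ⟨∅, by simp⟩ ?mono ?union ?nhds
  case mono =>
    rintro t t' htt' ⟨I, hI⟩
    exact ⟨I, fun x hx ↦ hI x (htt' hx)⟩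
  case union =>
    rintro t t' ⟨I, hI⟩ ⟨J, hJ⟩
    refine ⟨I ∪ J, ?_⟩
    rintro x (hx | hx) y hxy
    · exact hI x hx y fun i hi ↦ hxy i (Finset.mem_union_left J hi)
    · exact hJ x hx y fun i hi ↦ hxy i (Finset.mem_union_right I hi)
  case nhds =>
    intro x hx
    obtain ⟨I, u, hu, huV⟩ := isOpen_pi_iff.1 hV x (hsV hx)
    have hu_nhds : (I : Set ι).pi u ∈ 𝓝 x :=
      set_pi_mem_nhds I.finite_toSet fun i hi ↦ (hu i hi).1.mem_nhds (hu i hi).2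
    refine ⟨_, mem_nhdsWithin_of_mem_nhds hu_nhds, I, fun z hz y hyz ↦ huV fun i hi ↦ ?_⟩
    exact hyz i hi ▸ hz i hi

variable {K : ∀ i, Set (π i)}

theorem exists_finset_pi_subset_of_univ_pi_subset_isOpen (hK : ∀ i, IsCompact (K i))
    {V : Set (∀ i, π i)} (hV : IsOpen V) (hKV : univ.pi K ⊆ V) :
    ∃ I : Finset ι, (I : Set ι).pi K ⊆ V := by
  classical
  rcases (univ.pi K).eq_empty_or_nonempty with h_empty | ⟨z, hz⟩
  · obtain ⟨i, hi⟩ := univ_pi_eq_empty_iff.1 h_empty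
    exact ⟨{i}, fun x hx ↦ by simpa [hi] using hx i⟩
  · obtain ⟨I, hI⟩ :=
      exists_finset_forall_eqOn_mem_of_isCompact_subset_isOpen (isCompact_univ_pi hK) hV hKV
    refine ⟨I, fun x hx ↦ hI ((I : Set ι).piecewise x z) (fun i _ ↦ ?_) x fun i hi ↦ ?_⟩
    · by_cases hi : i ∈ (I : Set ι)
      · simpa only [piecewise_eq_of_mem _ _ _ hi] using hx i hi
      · simpa only [piecewise_eq_of_notMem _ _ _ hi] using hz i (mem_univ i)
    · exact (piecewise_eq_of_mem _ _ _ hi).symm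

theorem iInter_closure_image_finset_pi_eq_image_univ_pi {X : Type*} [TopologicalSpace X]
    [T2Space X] {f : (∀ i, π i) → X} (hf : Continuous f) (hK : ∀ i, IsCompact (K i)) :
    ⋂ I : Finset ι, closure (f '' (I : Set ι).pi K) = f '' univ.pi K := by
  refine Subset.antisymm (fun y hy ↦ ?_) (subset_iInter fun I ↦ ?_)
  · by_contra hyK
    obtain ⟨U, V, hU, hV, hKU, hyV, hUV⟩ : SeparatedNhds (f '' univ.pi K) {y} :=
      .of_isCompact_isCompact ((isCompact_univ_pi hK).image hf) isCompact_singleton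
        (disjoint_singleton_right.2 hyK)
    obtain ⟨I, hI⟩ := exists_finset_pi_subset_of_univ_pi_subset_isOpen hK (hU.preimage hf)
      (image_subset_iff.1 hKU)
    have h_disjoint : Disjoint (closure (f '' (I : Set ι).pi K)) V :=
      (hUV.mono_left (image_subset_iff.2 hI)).closure_left hV
    exact h_disjoint.notMem_of_mem_left (mem_iInter.1 hy I) (singleton_subset_iff.1 hyV)
  · exact (image_mono (pi_mono' (fun _ _ ↦ Subset.rfl) (subset_univ _))).trans subset_closure

end Product

section Measure

variable {X : Type*} [MeasurableSpace X] {μ : Measure X} {c : ℝ≥0∞}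

section Bounds

variable {α β : Type*} [Preorder β] [IsDirectedOrder β] [(atTop : Filter β).IsCountablyGenerated]

theorem exists_lt_measure_image_inter_le {f : α → X} {S : Set α} (hc : c < μ (f '' S))
    (g : α → β) : ∃ m, c < μ (f '' (S ∩ {a | g a ≤ m})) := by
  have h_mono : Monotone fun m ↦ f '' (S ∩ {a | g a ≤ m}) := fun _ _ hmm' ↦
    image_mono (inter_subset_inter_right S fun _ ha ↦ le_trans ha hmm')
  have h_iUnion : f '' S = ⋃ m, f '' (S ∩ {a | g a ≤ m}) := by
    rw [← image_iUnion, ← inter_iUnion,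
      iUnion_eq_univ_iff.2 fun a ↦ ⟨g a, le_refl (g a)⟩, inter_univ]
  rw [h_iUnion, h_mono.measure_iUnion] at hc
  exact lt_iSup_iff.1 hc

theorem exists_seq_forall_finset_lt_measure_image [Nonempty β] {f : α → X}
    (hc : c < μ (range f)) (g : ℕ → α → β) :
    ∃ b : ℕ → β, ∀ I : Finset ℕ, c < μ (f '' {a | ∀ i ∈ I, g i a ≤ b i}) := by
  choose! bound hbound using fun (n : ℕ) (S : Set α) (hS : c < μ (f '' S)) ↦
    exists_lt_measure_image_inter_le hS (g n)
  let S : ℕ → Set α := Nat.rec univ fun n T ↦ T ∩ {a | g n a ≤ bound n T}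
  have hS_lt (n : ℕ) : c < μ (f '' S n) := by
    induction n with
    | zero => rwa [← image_univ] at hc
    | succ n ih => exact hbound n (S n) ih
  have hS_anti : Antitone S := antitone_nat_of_succ_le fun _ ↦ inter_subset_left
  refine ⟨fun n ↦ bound n (S n), fun I ↦ ?_⟩
  obtain ⟨n, hn⟩ := I.exists_nat_subset_range
  refine (hS_lt n).trans_le (measure_mono (image_mono fun a ha i hi ↦ ?_))
  exact (hS_anti (Finset.mem_range.1 (hn hi)) ha).2

end Bounds

theorem nullMeasurableSet_of_forall_lt_exists_measurableSet_subset {A : Set X} (hA : μ A ≠ ∞)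
    (h : ∀ r < μ A, ∃ B ⊆ A, MeasurableSet B ∧ r < μ B) : NullMeasurableSet A μ := by
  rcases eq_zero_or_pos (μ A) with h_zero | h_pos
  · exact .of_null h_zero
  obtain ⟨r, -, hr, hr_tendsto⟩ := exists_seq_strictMono_tendsto' h_pos
  choose B hBA hB hrB using fun n ↦ h (r n) (hr n).2
  have h_measurable : NullMeasurableSet (⋃ n, B n) μ :=
    (MeasurableSet.iUnion hB).nullMeasurableSet
  have h_le : μ A ≤ μ (⋃ n, B n) := le_of_tendsto' hr_tendsto fun n ↦
    (hrB n).le.trans (measure_mono (subset_iUnion B n))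
  exact h_measurable.congr
    (ae_eq_of_subset_of_measure_ge (iUnion_subset hBA) h_le h_measurable hA)

variable [TopologicalSpace X] [T2Space X] [OpensMeasurableSpace X]

theorem exists_isCompact_subset_range_le_measure [IsFiniteMeasure μ] {f : (ℕ → ℕ) → X}
    (hf : Continuous f) (hc : c < μ (range f)) : ∃ K ⊆ range f, IsCompact K ∧ c ≤ μ K := by
  obtain ⟨b, hb⟩ := exists_seq_forall_finset_lt_measure_image hc fun i x ↦ x i
  have h_compact (i : ℕ) : IsCompact (Iic (b i)) := (finite_Iic (b i)).isCompact
  refine ⟨f '' univ.pi fun i ↦ Iic (b i), image_subset_range _ _,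
    (isCompact_univ_pi h_compact).image hf, ?_⟩
  have h_anti : Antitone fun I : Finset ℕ ↦ closure (f '' (I : Set ℕ).pi fun i ↦ Iic (b i)) :=
    fun _ _ hIJ ↦ closure_mono (image_mono (pi_mono' (fun _ _ ↦ Subset.rfl) hIJ))
  rw [← iInter_closure_image_finset_pi_eq_image_univ_pi hf h_compact,
    h_anti.measure_iInter (fun _ ↦ isClosed_closure.nullMeasurableSet) ⟨∅, measure_ne_top μ _⟩]
  exact le_iInf fun I ↦ (hb I).le.trans (measure_mono subset_closure)

theorem innerRegularWRT_isCompact_analyticSet [IsFiniteMeasure μ] :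
    μ.InnerRegularWRT IsCompact AnalyticSet := by
  intro A hA r hr
  obtain ⟨c, hrc, hcA⟩ := exists_between hr
  rw [AnalyticSet] at hA
  rcases hA with rfl | ⟨f, hf, rfl⟩
  · simp at hr
  · obtain ⟨K, hKA, hK, hcK⟩ := exists_isCompact_subset_range_le_measure hf hcA
    exact ⟨K, hKA, hK, hrc.trans_le hcK⟩

theorem nullMeasurableSet_of_analyticSet [SFinite μ] {A : Set X} (hA : AnalyticSet A) :
    NullMeasurableSet A μ := by
  suffices NullMeasurableSet A μ.toFinite from this.mono_ac (absolutelyContinuous_toFinite μ)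
  refine nullMeasurableSet_of_forall_lt_exists_measurableSet_subset (measure_ne_top _ A)
    fun r hr ↦ ?_
  obtain ⟨K, hKA, hK, hrK⟩ := innerRegularWRT_isCompact_analyticSet hA r hr
  exact ⟨K, hKA, hK.measurableSet, hrK⟩

end Measure

theorem analyticSet_universally_measurable_general {X : Type*} [TopologicalSpace X] [T2Space X]
    [MeasurableSpace X] [OpensMeasurableSpace X] {A : Set X} (hA : AnalyticSet A)
    (μ : Measure X) [SFinite μ] :
    (∃ B₁ B₂ : Set X, MeasurableSet B₁ ∧ MeasurableSet B₂ ∧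
      B₁ ⊆ A ∧ A ⊆ B₂ ∧ μ (B₂ \ B₁) = 0) ∧
    NullMeasurableSet A μ := by
  have hA_null : NullMeasurableSet A μ := nullMeasurableSet_of_analyticSet hA
  obtain ⟨B₁, hB₁A, hB₁, hB₁_ae⟩ := hA_null.exists_measurable_subset_ae_eq
  obtain ⟨B₂, hAB₂, hB₂, hB₂_ae⟩ := hA_null.exists_measurable_superset_ae_eq
  have h_diff : μ (B₂ \ B₁) = 0 := ae_le_set.1 (hB₂_ae.trans hB₁_ae.symm).le
  exact ⟨⟨B₁, B₂, hB₁, hB₂, hB₁A, hAB₂, h_diff⟩, hA_null⟩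

/-- Every analytic subset `A` of a Polish space `X` is
universally measurable: for every finite Borel measure `μ` on `X` there are
Borel sets `B₁ ⊆ A ⊆ B₂` with `μ (B₂ \ B₁) = 0`; equivalently, `A` belongs to
the `μ`-completion of the Borel σ-algebra for every finite Borel measure. -/
theorem analyticSet_universally_measurable
    {X : Type*} [TopologicalSpace X] [PolishSpace X]
    [MeasurableSpace X] [BorelSpace X]
    (A : Set X) (hA : MeasureTheory.AnalyticSet A) :
    ∀ μ : Measure X, IsFiniteMeasure μ →
      (∃ B₁ B₂ : Set X, MeasurableSet B₁ ∧ MeasurableSet B₂ ∧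
        B₁ ⊆ A ∧ A ⊆ B₂ ∧ μ (B₂ \ B₁) = 0) ∧
      NullMeasurableSet A μ :=
  fun μ _ ↦ analyticSet_universally_measurable_general hA μ
end
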